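/- arXiv:1607.05035 — 2 statements merged into one kernel-verified Lean document; each statement's English description precedes it below -/
import Mathlib

section
/- With σ = 12 h^{-2}, the restricted operators A_α = Q_α′ A Q_α on the subspaces S_α of S^2 satisfy, in the spectral sense: A_{00} ≤ (1 + 2σ) M_0 ⊗ M_0 =: L_{00}, A_{01} ≤ M_0 ⊗ ((1+σ)M_1 + K_1) =: L_{01}, A_{10} ≤ ((1+σ)M_1 + K_1) ⊗ M_0 =: L_{10}, and A_{11} = M_1 ⊗ M_1 + K_1 ⊗ M_1 + M_1 ⊗ K_1 =: L_{11}. -/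
noncomputable section

open MeasureTheory Set

namespace SplineMG

/-- The `j`-th piece of the uniform partition of `[0,1]` into `m` subintervals of
length `h = 1/m`; the first and last pieces are extended to `-∞` resp. `+∞`
(the spline is extended polynomially outside `[0,1]`). -/
def pieceSet (m j : ℕ) : Set ℝ :=
  (if j = 0 then Iic ((1 : ℝ) / m) else Icc ((j : ℝ) / m) (((j : ℝ) + 1) / m)) ∪
  (if j = m - 1 then Ici (((m : ℝ) - 1) / m) else ∅)

/-- `u : ℝ → ℝ` belongs to the univariate spline space `S` of degree `p` and maximal
smoothness `C^{p-1}` on the uniform partition of `(0,1)` into `m` intervals of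
length `h = 1/m`. -/
def IsSpline (m p : ℕ) (u : ℝ → ℝ) : Prop :=
  ContDiffOn ℝ (p - 1 : ℕ) u (Ioo (0 : ℝ) 1) ∧
  ∀ j < m, ∃ q : Polynomial ℝ, q.natDegree ≤ p ∧ ∀ x ∈ pieceSet m j, u x = q.eval x

/-- `u` belongs to the subspace `S₀` of `S`: all odd derivatives of order `< p`
vanish at both endpoints. -/
def IsSpline0 (m p : ℕ) (u : ℝ → ℝ) : Prop :=
  IsSpline m p u ∧
  ∀ l : ℕ, 2 * l + 1 < p →
    iteratedDeriv (2 * l + 1) u 0 = 0 ∧ iteratedDeriv (2 * l + 1) u 1 = 0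

/-- The `L²(0,1)` inner product. -/
def ip0 (u v : ℝ → ℝ) : ℝ := ∫ x in Ioo (0 : ℝ) 1, u x * v x

/-- The squared `L²(0,1)` norm `‖u‖₀²`. -/
def l2normSq (u : ℝ → ℝ) : ℝ := ∫ x in Ioo (0 : ℝ) 1, u x ^ 2

/-- The `L²(0,1)` norm `‖u‖₀`. -/
def l2norm (u : ℝ → ℝ) : ℝ := Real.sqrt (l2normSq u)

/-- The squared `H¹(0,1)` seminorm `|u|₁²`. -/
def h1semiSq (u : ℝ → ℝ) : ℝ := ∫ x in Ioo (0 : ℝ) 1, deriv u x ^ 2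

/-- The `H¹(0,1)` seminorm `|u|₁`. -/
def h1semi (u : ℝ → ℝ) : ℝ := Real.sqrt (h1semiSq u)

/-- The squared full `H¹(0,1)` norm. -/
def h1normSq (u : ℝ → ℝ) : ℝ := l2normSq u + h1semiSq u

/-- `u` belongs to `S₁`, the `L²(0,1)`-orthogonal complement of `S₀` in `S`. -/
def IsSpline1 (m p : ℕ) (u : ℝ → ℝ) : Prop :=
  IsSpline m p u ∧ ∀ v, IsSpline0 m p v → ip0 u v = 0

/-- `v = Q₀ u` is the `L²(0,1)`-orthogonal projection of `u` onto `S₀`. -/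
def IsL2Proj0 (m p : ℕ) (u v : ℝ → ℝ) : Prop :=
  IsSpline0 m p v ∧ ∀ w, IsSpline0 m p w → ip0 (u - v) w = 0

/-- The component predicate: `false ↦ S₀`, `true ↦ S₁`. -/
def IsSplineC (m p : ℕ) : Bool → (ℝ → ℝ) → Prop
  | false => IsSpline0 m p
  | true => IsSpline1 m p

/-- The tensor-product spline space `S^d = S ⊗ ⋯ ⊗ S` on `(0,1)^d`. -/
def TensorSpline (d m p : ℕ) : Submodule ℝ ((Fin d → ℝ) → ℝ) :=
  Submodule.span ℝ {u | ∃ f : Fin d → ℝ → ℝ, (∀ i, IsSpline m p (f i)) ∧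
    u = fun x => ∏ i, f i (x i)}

/-- The subspace `S_α = S_{α₁} ⊗ ⋯ ⊗ S_{α_d}` of `S^d`, for `α ∈ {0,1}^d`
(`false ↦ 0`, `true ↦ 1`). -/
def TensorSplineSub (d m p : ℕ) (α : Fin d → Bool) : Submodule ℝ ((Fin d → ℝ) → ℝ) :=
  Submodule.span ℝ {u | ∃ f : Fin d → ℝ → ℝ, (∀ i, IsSplineC m p (α i) (f i)) ∧
    u = fun x => ∏ i, f i (x i)}

/-- The open unit cube `Ω = (0,1)^d`. -/
def cube (d : ℕ) : Set (Fin d → ℝ) := Set.univ.pi fun _ => Ioo (0 : ℝ) 1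

/-- The `i`-th partial derivative. -/
def pd (d : ℕ) (i : Fin d) (u : (Fin d → ℝ) → ℝ) : (Fin d → ℝ) → ℝ :=
  fun x => deriv (fun t => u (Function.update x i t)) (x i)

/-- The `L²(Ω)` inner product on the unit cube. -/
def ipd (d : ℕ) (u v : (Fin d → ℝ) → ℝ) : ℝ := ∫ x in cube d, u x * v x

/-- The squared `L²(Ω)` norm. -/
def l2normSqD (d : ℕ) (u : (Fin d → ℝ) → ℝ) : ℝ := ∫ x in cube d, u x ^ 2

/-- The bilinear form `a(u,v) = ∫_Ω (∇u·∇v + uv) dx`. -/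
def aForm (d : ℕ) (u v : (Fin d → ℝ) → ℝ) : ℝ :=
  ∫ x in cube d, (∑ i, pd d i u x * pd d i v x) + u x * v x

/-- The squared `H¹(Ω)` seminorm. -/
def h1semiSqD (d : ℕ) (u : (Fin d → ℝ) → ℝ) : ℝ :=
  ∫ x in cube d, ∑ i, pd d i u x ^ 2

/-- The squared full `H¹(Ω)` norm. -/
def h1normSqD (d : ℕ) (u : (Fin d → ℝ) → ℝ) : ℝ := l2normSqD d u + h1semiSqD d u

/-- `v = Q_α u` is the `L²(Ω)`-orthogonal projection of `u` onto `S_α`. -/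
def IsL2ProjSub (d m p : ℕ) (α : Fin d → Bool) (u v : (Fin d → ℝ) → ℝ) : Prop :=
  v ∈ TensorSplineSub d m p α ∧ ∀ w ∈ TensorSplineSub d m p α, ipd d (u - v) w = 0

/-- The coarse tensor-product spline space `(S_c)^d` (with `m/2` knot spans of
width `2h` per direction). -/
def TensorSplineCoarse (d m p : ℕ) : Submodule ℝ ((Fin d → ℝ) → ℝ) :=
  TensorSpline d (m / 2) p

/-- `v = T_c u` is the `a(·,·)`-orthogonal (Galerkin) projection of `u` onto `(S_c)^d`. -/
def IsGalerkinCoarseProj (d m p : ℕ) (u v : (Fin d → ℝ) → ℝ) : Prop :=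
  v ∈ TensorSplineCoarse d m p ∧ ∀ w ∈ TensorSplineCoarse d m p, aForm d (u - v) w = 0

end SplineMG

namespace SplineMG

/-- Algebraic form of a spline: matching polynomial pieces with endpoint conditions. -/
def Good (m p e : ℕ) (q : ℕ → Polynomial ℝ) : Prop :=
  (∀ j < m, (q j).natDegree ≤ p) ∧
  (∀ j, j + 1 < m → ∀ k < p,
    (Polynomial.derivative^[k] (q j)).eval (((j : ℝ) + 1) / m) =
    (Polynomial.derivative^[k] (q (j + 1))).eval (((j : ℝ) + 1) / m)) ∧
  (∀ k < p, k % 2 = e % 2 →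
    (Polynomial.derivative^[k] (q 0)).eval 0 = 0 ∧
    (Polynomial.derivative^[k] (q (m - 1))).eval 1 = 0)

/-- piecewise inner product -/
def NN (m : ℕ) (q r : ℕ → Polynomial ℝ) : ℝ :=
  ∑ j ∈ Finset.range m, ∫ x in ((j : ℝ) / m)..(((j : ℝ) + 1) / m), (q j).eval x * (r j).eval x

/-- piecewise derivative -/
def dd (q : ℕ → Polynomial ℝ) : ℕ → Polynomial ℝ := fun j => Polynomial.derivative (q j)

lemma good_dd {m p e : ℕ} {q : ℕ → Polynomial ℝ} (h : Good m (p + 1) e q) :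
    Good m p (e + 1) (dd q) := by
  obtain ⟨h1, h2, h3⟩ := h
  refine ⟨fun j hj => ?_, fun j hj k hk => ?_, fun k hk hke => ?_⟩
  · have := Polynomial.natDegree_derivative_le (q j)
    have := h1 j hj
    simp only [dd]; omega
  · have := h2 j hj (k + 1) (by omega)
    simpa [dd, Function.iterate_succ_apply] using this
  · have := h3 (k + 1) (by omega) (by omega)
    simpa [dd, Function.iterate_succ_apply] using this

lemma poly_ii (a b : ℝ) (q r : Polynomial ℝ) :
    IntervalIntegrable (fun x => q.eval x * r.eval x) volume a b :=
  (q.continuous.mul r.continuous).intervalIntegrable a b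

lemma base_int (a b s h c : ℝ) (hh : 0 < h) (hc : c * h ^ 2 = 12) :
    (∫ _ in s..(s + h), a * a) ≤ c * ∫ x in s..(s + h), (a * x + b) * (a * x + b) := by
  have e1 : (∫ x in s..(s + h), (a * x + b) * (a * x + b)) =
      a ^ 2 * (((s + h) ^ 3 - s ^ 3) / 3) + 2 * a * b * (((s + h) ^ 2 - s ^ 2) / 2) + b ^ 2 * h := by
    have : ∀ x ∈ uIcc s (s + h), HasDerivAt
        (fun x : ℝ => a ^ 2 * (x ^ 3 / 3) + a * b * x ^ 2 + b ^ 2 * x)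
        ((a * x + b) * (a * x + b)) x := by
      intro x _
      have h3 := ((hasDerivAt_pow 3 x).div_const 3).const_mul (a ^ 2)
      have h2 := (hasDerivAt_pow 2 x).const_mul (a * b)
      have h1 := (hasDerivAt_id x).const_mul (b ^ 2)
      have := (h3.add h2).add h1
      convert! this using 1
      simp; ring
    rw [intervalIntegral.integral_eq_sub_of_hasDerivAt this
      (Continuous.intervalIntegrable (by fun_prop) _ _)]
    ring
  rw [e1, intervalIntegral.integral_const]
  have hc0 : 0 < c := by
    have : 0 < h ^ 2 := by positivity
    nlinarith
  have key : a ^ 2 * (((s + h) ^ 3 - s ^ 3) / 3) + 2 * a * b * (((s + h) ^ 2 - s ^ 2) / 2) + b ^ 2 * h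
      = h * (a * (s + h / 2) + b) ^ 2 + a ^ 2 * h * h ^ 2 / 12 := by ring
  rw [key, mul_add]
  have k2 : c * (a ^ 2 * h * h ^ 2 / 12) = a ^ 2 * h := by
    linear_combination (a ^ 2 * h / 12) * hc
  rw [k2]
  have : 0 ≤ c * (h * (a * (s + h / 2) + b) ^ 2) := by positivity
  simp only [smul_eq_mul]
  nlinarith

lemma inv_base {m e : ℕ} (hm : 1 ≤ m) {q : ℕ → Polynomial ℝ} (h : Good m 1 e q) :
    NN m (dd q) (dd q) ≤ 12 * (m : ℝ) ^ 2 * NN m q q := by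
  have hm0 : (0 : ℝ) < m := by exact_mod_cast hm
  unfold NN
  rw [Finset.mul_sum]
  refine Finset.sum_le_sum fun j hj => ?_
  obtain ⟨a, b, hab⟩ := Polynomial.exists_eq_X_add_C_of_natDegree_le_one
    (h.1 j (Finset.mem_range.1 hj))
  have e1 : ((j : ℝ) + 1) / m = (j : ℝ) / m + 1 / m := by ring
  rw [e1]
  have := base_int a b ((j : ℝ) / m) (1 / m) (12 * (m : ℝ) ^ 2) (by positivity) (by field_simp)
  simpa [dd, hab] using this

lemma telescope {m p e : ℕ} (hm : 1 ≤ m) {q : ℕ → Polynomial ℝ} (h : Good m (p + 2) e q) :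
    ∑ j ∈ Finset.range m, ((q j * dd q j).eval (((j : ℝ) + 1) / m)
      - (q j * dd q j).eval ((j : ℝ) / m)) = 0 := by
  have hm0 : (0 : ℝ) < m := by exact_mod_cast hm
  obtain ⟨_, h2, h3⟩ := h
  have key : ∀ n, n + 1 ≤ m → ∑ j ∈ Finset.range (n + 1), ((q j * dd q j).eval (((j : ℝ) + 1) / m)
      - (q j * dd q j).eval ((j : ℝ) / m)) = (q n * dd q n).eval (((n : ℝ) + 1) / m)
       - (q 0 * dd q 0).eval 0 := by
    intro n
    induction n with
    | zero => intro _; simp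
    | succ n ih =>
      intro hn
      rw [Finset.sum_range_succ, ih (by omega)]
      have a0 := h2 n (by omega) 0 (by omega)
      have a1 := h2 n (by omega) 1 (by omega)
      simp only [Function.iterate_zero, id, Function.iterate_one] at a0 a1
      push_cast
      simp only [Polynomial.eval_mul, dd, a0, a1]
      ring
  obtain ⟨n, rfl⟩ : ∃ n, m = n + 1 := ⟨m - 1, by omega⟩
  rw [key n le_rfl]
  have e1 : ((n : ℝ) + 1) / ((n + 1 : ℕ) : ℝ) = 1 := by
    push_cast at hm0 ⊢
    exact div_self hm0.ne'
  rw [e1]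
  simp only [Polynomial.eval_mul, dd]
  rcases Nat.mod_two_eq_zero_or_one e with he | he
  · have := h3 0 (by omega) (by omega)
    simp at this
    simp [this]
  · have := h3 1 (by omega) (by omega)
    simp at this
    simp [this]

lemma ibp {m p e : ℕ} (hm : 1 ≤ m) {q : ℕ → Polynomial ℝ} (h : Good m (p + 2) e q) :
    NN m (dd q) (dd q) = - NN m q (dd (dd q)) := by
  have ht := telescope hm h
  have : NN m q (dd (dd q)) = ∑ j ∈ Finset.range m, ((q j * dd q j).eval (((j : ℝ) + 1) / m)
      - (q j * dd q j).eval ((j : ℝ) / m)) - NN m (dd q) (dd q) := by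
    unfold NN
    rw [← Finset.sum_sub_distrib]
    refine Finset.sum_congr rfl fun j _ => ?_
    simp only [Polynomial.eval_mul]
    exact intervalIntegral.integral_mul_deriv_eq_deriv_mul
      (fun x _ => (q j).hasDerivAt x) (fun x _ => (dd q j).hasDerivAt x)
      ((dd q j).continuous.intervalIntegrable _ _) ((dd (dd q) j).continuous.intervalIntegrable _ _)
  rw [this, ht]; ring

lemma NN_sq {m : ℕ} (hm : 1 ≤ m) (q r : ℕ → Polynomial ℝ) (c : ℝ) :
    0 ≤ NN m r r + 2 * c * NN m q r + c ^ 2 * NN m q q := by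
  have hm0 : (0 : ℝ) < m := by exact_mod_cast hm
  unfold NN
  rw [Finset.mul_sum, Finset.mul_sum, ← Finset.sum_add_distrib, ← Finset.sum_add_distrib]
  refine Finset.sum_nonneg fun j _ => ?_
  rw [← intervalIntegral.integral_const_mul, ← intervalIntegral.integral_const_mul,
    ← intervalIntegral.integral_add (poly_ii _ _ _ _) ((poly_ii _ _ _ _).const_mul _),
    ← intervalIntegral.integral_add ((poly_ii _ _ _ _).add ((poly_ii _ _ _ _).const_mul _))
      ((poly_ii _ _ _ _).const_mul _)]
  refine intervalIntegral.integral_nonneg (by gcongr; linarith) fun x _ => ?_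
  nlinarith [sq_nonneg ((r j).eval x + c * (q j).eval x)]

lemma inv_poly {m : ℕ} (hm : 1 ≤ m) (p : ℕ) : ∀ (e : ℕ) (q : ℕ → Polynomial ℝ),
    Good m (p + 1) e q → NN m (dd q) (dd q) ≤ 12 * (m : ℝ) ^ 2 * NN m q q := by
  have hm0 : (0 : ℝ) < m := by exact_mod_cast hm
  induction p with
  | zero => intro e q h; exact inv_base hm h
  | succ p ih =>
    intro e q h
    have h1 := ih (e + 1) (dd q) (good_dd h)
    have h2 := ibp hm h
    have h3 := NN_sq hm q (dd (dd q)) (12 * (m : ℝ) ^ 2)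
    have hc : 0 < 12 * (m : ℝ) ^ 2 := by positivity
    generalize 12 * (m : ℝ) ^ 2 = c at *
    have : 0 ≤ c * (c * NN m q q - NN m (dd q) (dd q)) := by nlinarith
    nlinarith [nonneg_of_mul_nonneg_right this hc]

lemma iter_poly (q : Polynomial ℝ) (k : ℕ) :
    iteratedDeriv k (fun x => q.eval x) = fun x => (Polynomial.derivative^[k] q).eval x := by
  induction k generalizing q with
  | zero => simp
  | succ k ih =>
    rw [iteratedDeriv_succ', Function.iterate_succ_apply, ← ih]
    congr 1
    funext x
    exact q.deriv

lemma iter_local {u : ℝ → ℝ} {q : Polynomial ℝ} {a b x : ℝ} (hx : x ∈ Ioo a b)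
    (h : ∀ y ∈ Ioo a b, u y = q.eval y) (k : ℕ) :
    iteratedDeriv k u x = (Polynomial.derivative^[k] q).eval x := by
  have : u =ᶠ[nhds x] fun y => q.eval y := by
    filter_upwards [isOpen_Ioo.mem_nhds hx] with y hy using h y hy
  rw [this.iteratedDeriv_eq, iter_poly]

lemma deriv_local {u : ℝ → ℝ} {q : Polynomial ℝ} {a b x : ℝ} (hx : x ∈ Ioo a b)
    (h : ∀ y ∈ Ioo a b, u y = q.eval y) :
    HasDerivAt u (q.derivative.eval x) x := by
  have : u =ᶠ[nhds x] fun y => q.eval y := by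
    filter_upwards [isOpen_Ioo.mem_nhds hx] with y hy using h y hy
  exact (q.hasDerivAt x).congr_of_eventuallyEq this

lemma mem_piece {m j : ℕ} {x : ℝ} (h1 : (j : ℝ) / m ≤ x) (h2 : x ≤ ((j : ℝ) + 1) / m) :
    x ∈ pieceSet m j := by
  left
  split_ifs with h
  · subst h; simpa using h2
  · exact ⟨h1, h2⟩

lemma mem_piece_first {m : ℕ} {x : ℝ} (h2 : x ≤ 1 / m) :
    x ∈ pieceSet m 0 := by
  left
  simpa using h2

lemma mem_piece_last {m : ℕ} {x : ℝ} (h2 : ((m : ℝ) - 1) / m ≤ x) :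
    x ∈ pieceSet m (m - 1) := by
  right
  simpa using h2

/-- `u` is given by the pieces `q`. -/
def Rep (m : ℕ) (u : ℝ → ℝ) (q : ℕ → Polynomial ℝ) : Prop :=
  ∀ j < m, ∀ x ∈ pieceSet m j, u x = (q j).eval x

lemma IsSpline.rep {m p : ℕ} {u : ℝ → ℝ} (h : IsSpline m p u) : ∃ q, Rep m u q ∧
    ∀ j < m, (q j).natDegree ≤ p := by
  choose q hq using h.2
  refine ⟨fun j => if hj : j < m then q j hj else 0, fun j hj x hx => ?_, fun j hj => ?_⟩
  · simp only [hj, dif_pos]; exact (hq j hj).2 x hx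
  · simp only [hj, dif_pos]; exact (hq j hj).1

lemma IsSpline0.good {m p : ℕ} (hm : 1 ≤ m) (hp : 1 ≤ p) {u : ℝ → ℝ} (h : IsSpline0 m p u) :
    ∃ q, Rep m u q ∧ Good m p 1 q := by
  have hm0 : (0 : ℝ) < m := by exact_mod_cast hm
  obtain ⟨q, hq, hd⟩ := h.1.rep
  have hsm := h.1.1
  refine ⟨q, hq, hd, fun j hj k hk => ?_, fun k hk hk2 => ?_⟩
  · set t : ℝ := ((j : ℝ) + 1) / m with ht
    have hjm : (j : ℝ) + 1 < m := by exact_mod_cast hj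
    have ht01 : t ∈ Ioo (0 : ℝ) 1 := ⟨by positivity, (div_lt_one hm0).2 hjm⟩
    have hc : ContinuousAt (iteratedDerivWithin k u (Ioo 0 1)) t :=
      (hsm.continuousOn_iteratedDerivWithin (m := k) (by norm_cast; omega)
        isOpen_Ioo.uniqueDiffOn).continuousAt (isOpen_Ioo.mem_nhds ht01)
    have hL : ∀ (i : ℕ) (a b : ℝ), i < m → a = (i : ℝ) / m → b = ((i : ℝ) + 1) / m →
        ∀ x ∈ Ioo a b, iteratedDerivWithin k u (Ioo 0 1) x =
          (Polynomial.derivative^[k] (q i)).eval x := by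
      rintro i _ _ hi rfl rfl x hx
      have him : (i : ℝ) + 1 ≤ m := by exact_mod_cast hi
      have hx01 : x ∈ Ioo (0 : ℝ) 1 :=
        ⟨lt_of_le_of_lt (by positivity) hx.1, lt_of_lt_of_le hx.2 ((div_le_one hm0).2 him)⟩
      rw [iteratedDerivWithin_of_isOpen isOpen_Ioo hx01]
      exact iter_local hx (fun y hy => hq i hi y (mem_piece hy.1.le hy.2.le)) k
    have hl : (j : ℝ) / m < t := by rw [ht]; gcongr; linarith
    have hr : t < ((j : ℝ) + 1 + 1) / m := by rw [ht]; gcongr; linarith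
    have l1 := hc.tendsto.mono_left (nhdsWithin_le_nhds (s := Iio t))
    have l2 := hc.tendsto.mono_left (nhdsWithin_le_nhds (s := Ioi t))
    have e1 : iteratedDerivWithin k u (Ioo 0 1) =ᶠ[nhdsWithin t (Iio t)]
        fun x => (Polynomial.derivative^[k] (q j)).eval x := by
      filter_upwards [Ioo_mem_nhdsLT hl] with x hx
      exact hL j _ _ (by omega) rfl rfl x hx
    have e2 : iteratedDerivWithin k u (Ioo 0 1) =ᶠ[nhdsWithin t (Ioi t)]
        fun x => (Polynomial.derivative^[k] (q (j + 1))).eval x := by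
      filter_upwards [Ioo_mem_nhdsGT hr] with x hx
      exact hL (j + 1) _ _ (by omega) (by rw [ht]; push_cast; rfl) (by push_cast; rfl) x hx
    have c1 := ((Polynomial.derivative^[k] (q j)).continuous.tendsto t).mono_left
      (nhdsWithin_le_nhds (s := Iio t))
    have c2 := ((Polynomial.derivative^[k] (q (j + 1))).continuous.tendsto t).mono_left
      (nhdsWithin_le_nhds (s := Ioi t))
    rw [← tendsto_nhds_unique (l1.congr' e1) c1, ← tendsto_nhds_unique (l2.congr' e2) c2]
  · obtain ⟨l, rfl⟩ : ∃ l, k = 2 * l + 1 := ⟨k / 2, by omega⟩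
    have := h.2 l hk
    constructor
    · refine Eq.trans (iter_local (x := 0) (a := -1) (b := 1 / m) ⟨by norm_num, by positivity⟩ ?_ _).symm this.1
      intro y hy
      exact hq 0 (by omega) y (mem_piece_first hy.2.le)
    · refine Eq.trans (iter_local (x := 1) (a := ((m : ℝ) - 1) / m) (b := 2)
        ⟨(div_lt_one hm0).2 (by linarith), by norm_num⟩ ?_ _).symm this.2
      intro y hy
      exact hq (m - 1) (by omega) y (mem_piece_last hy.1.le)

/-- Functions with good pieces. -/
def TT (m p : ℕ) (u : ℝ → ℝ) : Prop := ∃ q, Rep m u q ∧ Good m p 1 q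

lemma TT.zero (m p : ℕ) : TT m p 0 :=
  ⟨0, fun j _ x _ => by simp, by simp [Good]⟩

lemma TT.add {m p : ℕ} {u v : ℝ → ℝ} (hu : TT m p u) (hv : TT m p v) : TT m p (u + v) := by
  obtain ⟨q, a, b1, b2, b3⟩ := hu
  obtain ⟨r, a', b1', b2', b3'⟩ := hv
  refine ⟨q + r, fun j hj x hx => by simp [a j hj x hx, a' j hj x hx], fun j hj => ?_,
    fun j hj k hk => ?_, fun k hk hk2 => ?_⟩
  · exact Polynomial.natDegree_add_le_of_degree_le (b1 j hj) (b1' j hj)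
  · simp [iterate_map_add, b2 j hj k hk, b2' j hj k hk]
  · simp [iterate_map_add, b3 k hk hk2, b3' k hk hk2]

lemma TT.smul {m p : ℕ} {u : ℝ → ℝ} (c : ℝ) (hu : TT m p u) : TT m p (c • u) := by
  obtain ⟨q, a, b1, b2, b3⟩ := hu
  refine ⟨c • q, fun j hj x hx => by simp [a j hj x hx], fun j hj => ?_,
    fun j hj k hk => ?_, fun k hk hk2 => ?_⟩
  · exact (Polynomial.natDegree_smul_le _ _).trans (b1 j hj)
  · simp [Polynomial.iterate_derivative_smul, b2 j hj k hk]
  · simp [Polynomial.iterate_derivative_smul, b3 k hk hk2]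

lemma int_pieces {m : ℕ} (hm : 1 ≤ m) {F : ℝ → ℝ} {Q : ℕ → ℝ → ℝ} (hQ : ∀ j, Continuous (Q j))
    (h : ∀ j < m, ∀ x ∈ Ioo ((j : ℝ) / m) (((j : ℝ) + 1) / m), F x = Q j x) :
    ∫ x in Ioo (0 : ℝ) 1, F x =
      ∑ j ∈ Finset.range m, ∫ x in ((j : ℝ) / m)..(((j : ℝ) + 1) / m), Q j x := by
  have hm0 : (0 : ℝ) < m := by exact_mod_cast hm
  have hle : ∀ j : ℕ, (j : ℝ) / m ≤ ((j : ℝ) + 1) / m := fun j => by gcongr; linarith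
  rw [← integral_Ioc_eq_integral_Ioo, ← intervalIntegral.integral_of_le zero_le_one]
  have := intervalIntegral.sum_integral_adjacent_intervals (f := F) (μ := volume)
    (a := fun j : ℕ => (j : ℝ) / m) (n := m) (by
      intro k hk
      simp only [Nat.cast_add, Nat.cast_one]
      refine ((hQ k).intervalIntegrable _ _).congr_uIoo ?_
      rw [uIoo_of_le (hle k)]
      intro x hx
      exact (h k hk x hx).symm)
  simp only [Nat.cast_add, Nat.cast_one, Nat.cast_zero, zero_div, div_self hm0.ne'] at this
  rw [← this]
  refine Finset.sum_congr rfl fun j hj => ?_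
  exact intervalIntegral.integral_congr_Ioo_of_le (hle j) (h j (Finset.mem_range.1 hj))

lemma inv_one {m p : ℕ} (hm : 1 ≤ m) (hp : 1 ≤ p) {u : ℝ → ℝ} (hu : TT m p u) :
    ∫ x in Ioo (0 : ℝ) 1, deriv u x ^ 2 ≤ ∫ x in Ioo (0 : ℝ) 1, 12 * (m : ℝ) ^ 2 * u x ^ 2 := by
  obtain ⟨q, hr, hg⟩ := hu
  obtain ⟨p, rfl⟩ : ∃ n, p = n + 1 := ⟨p - 1, by omega⟩
  have := inv_poly hm p 1 q hg
  rw [integral_const_mul]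
  rw [int_pieces hm (Q := fun j x => (dd q j).eval x * (dd q j).eval x) (by fun_prop),
    int_pieces hm (Q := fun j x => (q j).eval x * (q j).eval x) (by fun_prop)]
  · exact this
  · intro j hj x hx
    rw [hr j hj x (mem_piece hx.1.le hx.2.le)]; ring
  · intro j hj x hx
    rw [(deriv_local hx (fun y hy => hr j hj y (mem_piece hy.1.le hy.2.le))).deriv]
    simp only [dd]; ring

/-- knots -/
def KK (m : ℕ) : Set ℝ := range (fun j : ℕ => (j : ℝ) / m)

lemma off_knots {m : ℕ} (hm : 1 ≤ m) {x : ℝ} (hx : x ∈ Ioo (0 : ℝ) 1) (hk : x ∉ KK m) :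
    ∃ j < m, x ∈ Ioo ((j : ℝ) / m) (((j : ℝ) + 1) / m) := by
  have hm0 : (0 : ℝ) < m := by exact_mod_cast hm
  have h0 : 0 ≤ x * m := mul_nonneg hx.1.le hm0.le
  refine ⟨⌊x * m⌋₊, ?_, ?_, ?_⟩
  · rw [Nat.floor_lt h0]; nlinarith [hx.2]
  · refine lt_of_le_of_ne ((div_le_iff₀ hm0).2 (Nat.floor_le h0)) fun h => hk ⟨_, h⟩
  · rw [lt_div_iff₀ hm0]; exact Nat.lt_floor_add_one _

lemma cover {m : ℕ} (hm : 1 ≤ m) (x : ℝ) : ∃ j < m, x ∈ pieceSet m j := by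
  have hm0 : (0 : ℝ) < m := by exact_mod_cast hm
  rcases le_or_gt x 0 with h | h
  · exact ⟨0, hm, mem_piece_first (h.trans (by positivity))⟩
  have h0 : 0 ≤ x * m := mul_nonneg h.le hm0.le
  rcases lt_or_ge ⌊x * m⌋₊ m with h1 | h1
  · refine ⟨_, h1, mem_piece ((div_le_iff₀ hm0).2 (Nat.floor_le h0)) ?_⟩
    rw [le_div_iff₀ hm0]; exact (Nat.lt_floor_add_one _).le
  · refine ⟨m - 1, by omega, mem_piece_last ?_⟩
    rw [div_le_iff₀ hm0]
    have := (Nat.le_floor_iff h0).1 h1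
    linarith

lemma closed_piece (m j : ℕ) : IsClosed (pieceSet m j) := by
  unfold pieceSet
  refine IsClosed.union ?_ ?_ <;> split_ifs
  · exact isClosed_Iic
  · exact isClosed_Icc
  · exact isClosed_Ici
  · exact isClosed_empty

lemma Rep.cont {m : ℕ} (hm : 1 ≤ m) {u : ℝ → ℝ} {q : ℕ → Polynomial ℝ} (h : Rep m u q) :
    Continuous u := by
  refine LocallyFinite.continuous (f := fun j : Fin m => pieceSet m j)
    (locallyFinite_of_finite _) ?_ (fun j => closed_piece m j) ?_
  · refine eq_univ_of_forall fun x => ?_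
    obtain ⟨j, hj, hx⟩ := cover hm x
    exact mem_iUnion.2 ⟨⟨j, hj⟩, hx⟩
  · intro j
    exact (q j).continuous.continuousOn.congr (h j j.2)

lemma Rep.diff {m : ℕ} (hm : 1 ≤ m) {u : ℝ → ℝ} {q : ℕ → Polynomial ℝ} (h : Rep m u q)
    {x : ℝ} (hx : x ∈ Ioo (0 : ℝ) 1) (hk : x ∉ KK m) :
    DifferentiableAt ℝ u x := by
  obtain ⟨j, hj, hxj⟩ := off_knots hm hx hk
  exact (deriv_local hxj (fun y hy => h j hj y (mem_piece hy.1.le hy.2.le))).differentiableAt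

lemma Rep.bdd {m : ℕ} (hm : 1 ≤ m) {u : ℝ → ℝ} {q : ℕ → Polynomial ℝ} (h : Rep m u q) :
    ∃ C, 0 ≤ C ∧ ∀ x ∈ Ioo (0 : ℝ) 1, x ∉ KK m → |deriv u x| ≤ C := by
  have : ∀ j, ∃ C, ∀ x ∈ Icc (0 : ℝ) 1, ‖(q j).derivative.eval x‖ ≤ C := fun j =>
    isCompact_Icc.exists_bound_of_continuousOn (q j).derivative.continuous.continuousOn
  choose C hC using this
  have hC0 : ∀ j, 0 ≤ C j := fun j => (norm_nonneg _).trans (hC j 0 (by simp))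
  refine ⟨∑ j ∈ Finset.range m, C j, Finset.sum_nonneg fun j _ => hC0 j, fun x hx hk => ?_⟩
  obtain ⟨j, hj, hxj⟩ := off_knots hm hx hk
  rw [(deriv_local hxj (fun y hy => h j hj y (mem_piece hy.1.le hy.2.le))).deriv]
  exact (hC j x ⟨hx.1.le, hx.2.le⟩).trans
    (Finset.single_le_sum (f := C) (fun j _ => hC0 j) (Finset.mem_range.2 hj))

lemma cube_sub (d : ℕ) : cube d ⊆ Icc 0 1 := by
  intro x hx
  exact ⟨fun i => (hx i trivial).1.le, fun i => (hx i trivial).2.le⟩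

lemma cube_meas (d : ℕ) : MeasurableSet (cube d) :=
  MeasurableSet.univ_pi fun _ => measurableSet_Ioo

instance cube_fin (d : ℕ) : IsFiniteMeasure ((volume : Measure (Fin d → ℝ)).restrict (cube d)) :=
  ⟨by
    rw [Measure.restrict_apply_univ]
    exact (measure_mono (cube_sub d)).trans_lt isCompact_Icc.measure_lt_top⟩

lemma ae_off (d m : ℕ) (i : Fin d) :
    ∀ᵐ x ∂((volume : Measure (Fin d → ℝ)).restrict (cube d)), x ∈ cube d ∧ x i ∉ KK m := by
  have h1 : ∀ᵐ t : ℝ, t ∉ KK m := (countable_range _).ae_notMem _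
  have h2 : ∀ᵐ x : Fin d → ℝ, x i ∉ KK m :=
    (Measure.quasiMeasurePreserving_eval (fun _ : Fin d => (volume : Measure ℝ)) i).ae h1
  filter_upwards [ae_restrict_mem (cube_meas d), ae_restrict_of_ae h2] with x a b using ⟨a, b⟩

lemma cont_memLp {d : ℕ} {v : (Fin d → ℝ) → ℝ} (h : Continuous v) :
    MemLp v 2 (volume.restrict (cube d)) := by
  obtain ⟨C, hC⟩ := isCompact_Icc.exists_bound_of_continuousOn
    (s := Icc (0 : Fin d → ℝ) 1) h.continuousOn
  refine MemLp.of_bound h.aestronglyMeasurable C ?_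
  filter_upwards [ae_restrict_mem (cube_meas d)] with x hx using hC x (cube_sub d hx)

/-- regularity -/
def RR (m : ℕ) (v : (Fin 2 → ℝ) → ℝ) : Prop :=
  Continuous v ∧ ∀ i, MemLp (pd 2 i v) 2 (volume.restrict (cube 2)) ∧
    ∀ x ∈ cube 2, x i ∉ KK m → DifferentiableAt ℝ (fun t => v (Function.update x i t)) (x i)

lemma prod_update (f : Fin 2 → ℝ → ℝ) (x : Fin 2 → ℝ) (i : Fin 2) (t : ℝ) :
    ∏ k, f k (Function.update x i t k) = f i t * ∏ k, f (i.succAbove k) (x (i.succAbove k)) := by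
  rw [Fin.prod_univ_succAbove _ i]
  simp

lemma RR.prod {m p : ℕ} (hm : 1 ≤ m) {f : Fin 2 → ℝ → ℝ} (hf : ∀ i, IsSpline m p (f i)) :
    RR m (fun x => ∏ i, f i (x i)) := by
  have hrep : ∀ i, ∃ q, Rep m (f i) q := fun i => by
    obtain ⟨q, hq, _⟩ := (hf i).rep
    exact ⟨q, hq⟩
  choose q hq using hrep
  have hc : ∀ i, Continuous (f i) := fun i => (hq i).cont hm
  refine ⟨by fun_prop, fun i => ⟨?_, fun x hx hk => ?_⟩⟩
  · have e : pd 2 i (fun x => ∏ i, f i (x i)) =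
        fun x => deriv (f i) (x i) * ∏ k, f (i.succAbove k) (x (i.succAbove k)) := by
      funext x
      simp only [pd, prod_update]
      rw [deriv_mul_const_field]
    rw [e]
    have hg : Continuous fun x : Fin 2 → ℝ => ∏ k, f (i.succAbove k) (x (i.succAbove k)) := by
      fun_prop
    obtain ⟨C, hC0, hC⟩ := (hq i).bdd hm
    obtain ⟨D, hD⟩ := isCompact_Icc.exists_bound_of_continuousOn
      (s := Icc (0 : Fin 2 → ℝ) 1) hg.continuousOn
    refine MemLp.of_bound (((measurable_deriv (f i)).comp (measurable_pi_apply i)).mul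
      hg.measurable).aestronglyMeasurable (C * D) ?_
    filter_upwards [ae_off 2 m i] with x hx
    rw [norm_mul]
    exact mul_le_mul (hC _ (hx.1 i trivial) hx.2) (hD x (cube_sub 2 hx.1)) (norm_nonneg _) hC0
  · simp only [prod_update]
    exact ((hq i).diff hm (hx i trivial) hk).mul_const _

lemma RR.zero (m : ℕ) : RR m 0 := by
  refine ⟨continuous_const, fun i => ⟨?_, fun x _ _ => ?_⟩⟩
  · have : pd 2 i 0 = 0 := by funext x; simp [pd]
    rw [this]; exact MemLp.zero
  · simp

lemma RR.add {m : ℕ} {v w : (Fin 2 → ℝ) → ℝ} (hv : RR m v) (hw : RR m w) : RR m (v + w) := by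
  refine ⟨hv.1.add hw.1, fun i => ⟨?_, fun x hx hk => ?_⟩⟩
  · refine ((hv.2 i).1.add (hw.2 i).1).ae_eq ?_
    filter_upwards [ae_off 2 m i] with x hx
    exact (deriv_fun_add ((hv.2 i).2 x hx.1 hx.2) ((hw.2 i).2 x hx.1 hx.2)).symm
  · exact ((hv.2 i).2 x hx hk).add ((hw.2 i).2 x hx hk)

lemma RR.smul {m : ℕ} {v : (Fin 2 → ℝ) → ℝ} (c : ℝ) (hv : RR m v) : RR m (c • v) := by
  refine ⟨hv.1.const_smul c, fun i => ⟨?_, fun x hx hk => ?_⟩⟩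
  · refine ((hv.2 i).1.const_smul c).ae_eq ?_
    filter_upwards [ae_off 2 m i] with x hx
    exact (deriv_fun_const_smul c ((hv.2 i).2 x hx.1 hx.2)).symm
  · exact ((hv.2 i).2 x hx hk).const_smul c

lemma IsSplineC.spline {m p : ℕ} {b : Bool} {f : ℝ → ℝ} (h : IsSplineC m p b f) :
    IsSpline m p f := by
  cases b
  · exact h.1
  · exact h.1

lemma RR.of_mem {m p : ℕ} (hm : 1 ≤ m) {α : Fin 2 → Bool} {v : (Fin 2 → ℝ) → ℝ}
    (hv : v ∈ TensorSplineSub 2 m p α) : RR m v := by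
  unfold TensorSplineSub at hv
  induction hv using Submodule.span_induction with
  | mem x h =>
    obtain ⟨f, hf, rfl⟩ := h
    exact RR.prod hm fun i => (hf i).spline
  | zero => exact RR.zero m
  | add x y _ _ hx hy => exact hx.add hy
  | smul a x _ hx => exact hx.smul a

lemma TT.of_mem {m p : ℕ} (hm : 1 ≤ m) (hp : 1 ≤ p) {α : Fin 2 → Bool} {v : (Fin 2 → ℝ) → ℝ}
    (hv : v ∈ TensorSplineSub 2 m p α) (i : Fin 2) (hi : α i = false) (y : Fin 1 → ℝ) :
    TT m p (fun t => v (i.insertNth t y)) := by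
  unfold TensorSplineSub at hv
  induction hv using Submodule.span_induction with
  | mem x h =>
    obtain ⟨f, hf, rfl⟩ := h
    have h0 : IsSpline0 m p (f i) := by have := hf i; rwa [hi] at this
    have h1 : TT m p (f i) := h0.good hm hp
    have := h1.smul (∏ k, f (i.succAbove k) (y k))
    convert this using 1
    funext t
    change ∏ k, f k ((i.insertNth t y : Fin 2 → ℝ) k) = _
    rw [Fin.prod_univ_succAbove _ i]
    simp [mul_comm]
  | zero => exact TT.zero m p
  | add x y _ _ hx hy => exact hx.add hy
  | smul a x _ hx => exact hx.smul a

lemma fubini_le (i : Fin 2) {F G : (Fin 2 → ℝ) → ℝ}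
    (hF : IntegrableOn F (cube 2)) (hG : IntegrableOn G (cube 2))
    (h : ∀ y : Fin 1 → ℝ, ∫ t in Ioo (0 : ℝ) 1, F (i.insertNth t y) ≤
      ∫ t in Ioo (0 : ℝ) 1, G (i.insertNth t y)) :
    ∫ x in cube 2, F x ≤ ∫ x in cube 2, G x := by
  set e := (MeasurableEquiv.piFinSuccAbove (fun _ : Fin 2 => ℝ) i).symm with he
  have hmp : MeasurePreserving e :=
    (volume_preserving_piFinSuccAbove (fun _ : Fin 2 => ℝ) i).symm
  have hpre : e ⁻¹' (cube 2) = Ioo (0 : ℝ) 1 ×ˢ cube 1 := by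
    ext ⟨t, y⟩
    have : e (t, y) = i.insertNth t y := rfl
    simp only [mem_preimage, this, cube, mem_univ_pi, mem_prod]
    rw [Fin.forall_iff_succAbove i]
    simp
  have key : ∀ H : (Fin 2 → ℝ) → ℝ, IntegrableOn H (cube 2) →
      IntegrableOn (fun z : ℝ × (Fin 1 → ℝ) => H (e z)) (Ioo (0 : ℝ) 1 ×ˢ cube 1) ∧
      ∫ x in cube 2, H x = ∫ z in Ioo (0 : ℝ) 1 ×ˢ cube 1, H (e z) := by
    intro H hH
    rw [← hpre]
    exact ⟨(hmp.integrableOn_comp_preimage e.measurableEmbedding).2 hH,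
      (hmp.setIntegral_preimage_emb e.measurableEmbedding H (cube 2)).symm⟩
  obtain ⟨iF, eF⟩ := key F hF
  obtain ⟨iG, eG⟩ := key G hG
  have hv : (volume : Measure (ℝ × (Fin 1 → ℝ))).restrict (Ioo (0 : ℝ) 1 ×ˢ cube 1) =
    (volume.restrict (Ioo (0 : ℝ) 1)).prod (volume.restrict (cube 1)) := by
    rw [Measure.prod_restrict]; rfl
  unfold IntegrableOn at iF iG
  rw [eF, eG]
  rw [hv] at iF iG ⊢
  rw [integral_prod_symm _ iF, integral_prod_symm _ iG]
  exact integral_mono iF.integral_prod_right iG.integral_prod_right h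

lemma inv_dir {m p : ℕ} (hm : 1 ≤ m) (hp : 1 ≤ p) {α : Fin 2 → Bool} {v : (Fin 2 → ℝ) → ℝ}
    (hv : v ∈ TensorSplineSub 2 m p α) (i : Fin 2) (hi : α i = false) :
    ∫ x in cube 2, pd 2 i v x ^ 2 ≤ 12 * (m : ℝ) ^ 2 * l2normSqD 2 v := by
  have hR := RR.of_mem hm hv
  unfold l2normSqD
  rw [← integral_const_mul]
  refine fubini_le i (hR.2 i).1.integrable_sq ((cont_memLp hR.1).integrable_sq.const_mul _) ?_
  intro y
  have := inv_one hm hp (TT.of_mem hm hp hv i hi y)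
  simpa [pd, Fin.update_insertNth] using this

lemma aForm_eq {m p : ℕ} (hm : 1 ≤ m) {α : Fin 2 → Bool} {v : (Fin 2 → ℝ) → ℝ}
    (hv : v ∈ TensorSplineSub 2 m p α) :
    aForm 2 v v = l2normSqD 2 v + (∫ x in cube 2, pd 2 0 v x ^ 2) +
          ∫ x in cube 2, pd 2 1 v x ^ 2 := by
  have hR := RR.of_mem hm hv
  have h0 := (hR.2 0).1.integrable_sq
  have h1 := (hR.2 1).1.integrable_sq
  have h2 := (cont_memLp hR.1).integrable_sq
  unfold aForm l2normSqD
  rw [← integral_add h2 h0, ← integral_add (by exact h2.add h0) h1]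
  congr 1
  funext x
  simp [Fin.sum_univ_two]
  ring

/-- choice of the local smoothing operators, 2D: with
`σ = 12h⁻² = 12m²`, the restrictions `A_α = Q_α′AQ_α` of
`A = K⊗M + M⊗K + M⊗M` to the subspaces `S_α ⊂ S²` satisfy, in quadratic form,
`A₀₀ ≤ (1+2σ)M₀⊗M₀ = L₀₀`, `A₀₁ ≤ M₀⊗((1+σ)M₁+K₁) = L₀₁`,
`A₁₀ ≤ ((1+σ)M₁+K₁)⊗M₀ = L₁₀`, and
`A₁₁ = M₁⊗M₁ + K₁⊗M₁ + M₁⊗K₁ = L₁₁` (equality). -/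
theorem local_smoother_bounds_2d :
    ∀ m p : ℕ, 1 ≤ m → 1 ≤ p →
      (∀ v, v ∈ TensorSplineSub 2 m p ![false, false] →
        aForm 2 v v ≤ (1 + 2 * (12 * (m : ℝ) ^ 2)) * l2normSqD 2 v) ∧
      (∀ v, v ∈ TensorSplineSub 2 m p ![false, true] →
        aForm 2 v v ≤ (1 + 12 * (m : ℝ) ^ 2) * l2normSqD 2 v +
          ∫ x in cube 2, pd 2 1 v x ^ 2) ∧
      (∀ v, v ∈ TensorSplineSub 2 m p ![true, false] →
        aForm 2 v v ≤ (1 + 12 * (m : ℝ) ^ 2) * l2normSqD 2 v +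
          ∫ x in cube 2, pd 2 0 v x ^ 2) ∧
      (∀ v, v ∈ TensorSplineSub 2 m p ![true, true] →
        aForm 2 v v = l2normSqD 2 v + (∫ x in cube 2, pd 2 0 v x ^ 2) +
          ∫ x in cube 2, pd 2 1 v x ^ 2) := by
  intro m p hm hp
  refine ⟨fun v hv => ?_, fun v hv => ?_, fun v hv => ?_, fun v hv => aForm_eq hm hv⟩
  · rw [aForm_eq hm hv]
    have h0 := inv_dir hm hp hv 0 rfl
    have h1 := inv_dir hm hp hv 1 rfl
    linarith
  · rw [aForm_eq hm hv]
    have h0 := inv_dir hm hp hv 0 rfl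
    linarith
  · rw [aForm_eq hm hv]
    have h1 := inv_dir hm hp hv 1 rfl
    linarith

end SplineMG
end
end

section
/- Let A, M ∈ ℝ^{n×n} be symmetric positive definite, let T ∈ ℝ^{n×n} be an A-orthogonal projector onto a subspace W ⊆ ℝ^n (i.e. T² = T, range(T) = W, and AT = TᵀA), and let θ > 0. Then the two statements '‖Tu‖_M ≤ θ ‖u‖_A for all u ∈ ℝ^n' and '‖Tu‖_A ≤ θ ‖u‖_{AM^{-1}A} for all u ∈ ℝ^n' are equivalent. -/
noncomputable section

open Matrix

lemma an_symm {n : ℕ} {B : Matrix (Fin n) (Fin n) ℝ} (hB : B.PosDef) : Bᵀ = B := by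
  have h := hB.isHermitian
  rw [Matrix.IsHermitian, Matrix.conjTranspose_eq_transpose_of_trivial] at h
  exact h

lemma an_nonneg {n : ℕ} {B : Matrix (Fin n) (Fin n) ℝ} (hB : B.PosDef) (x : Fin n → ℝ) :
    0 ≤ x ⬝ᵥ (B *ᵥ x) := by
  simpa using hB.posSemidef.dotProduct_mulVec_nonneg x

lemma an_adj {n : ℕ} (B : Matrix (Fin n) (Fin n) ℝ) (x y : Fin n → ℝ) :
    x ⬝ᵥ (B *ᵥ y) = (Bᵀ *ᵥ x) ⬝ᵥ y := by
  rw [Matrix.dotProduct_mulVec, Matrix.mulVec_transpose]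

lemma an_cs {n : ℕ} {B : Matrix (Fin n) (Fin n) ℝ} (hB : B.PosDef) (x y : Fin n → ℝ) :
    x ⬝ᵥ (B *ᵥ y) ≤ Real.sqrt (x ⬝ᵥ (B *ᵥ x)) * Real.sqrt (y ⬝ᵥ (B *ᵥ y)) := by
  have hs : y ⬝ᵥ (B *ᵥ x) = x ⬝ᵥ (B *ᵥ y) := by
    rw [an_adj, an_symm hB, dotProduct_comm]
  have h : ∀ t : ℝ, 0 ≤ (x ⬝ᵥ (B *ᵥ x)) * (t * t) + (2 * (x ⬝ᵥ (B *ᵥ y))) * t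
      + y ⬝ᵥ (B *ᵥ y) := by
    intro t
    have h := an_nonneg hB (t • x + y)
    simp only [Matrix.mulVec_add, Matrix.mulVec_smul, dotProduct_add, add_dotProduct,
      smul_dotProduct, dotProduct_smul, smul_eq_mul, hs] at h
    linarith
  have hd := discrim_le_zero h
  rw [discrim] at hd
  rw [← Real.sqrt_mul (an_nonneg hB x)]
  apply Real.le_sqrt_of_sq_le
  nlinarith

lemma an_div {s r : ℝ} (hs : 0 ≤ s) (hr : 0 ≤ r) (h : s * s ≤ s * r) : s ≤ r := by
  rcases hs.eq_or_lt with h0 | h0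
  · rw [← h0]; exact hr
  · exact le_of_mul_le_mul_left h h0

/-- Lemma `lemma:dual`: let `A, M ∈ ℝ^{n×n}` be symmetric positive
definite, `T` an `A`-orthogonal projector onto a subspace `W ⊆ ℝⁿ` (i.e. `T² = T`,
`range(T) = W`, and `AT = TᵀA`), and `θ > 0`.  Then
`‖Tu‖_M ≤ θ‖u‖_A` for all `u` is equivalent to `‖Tu‖_A ≤ θ‖u‖_{AM⁻¹A}` for all `u`. -/
theorem aubin_nitsche_duality (n : ℕ) (A M T : Matrix (Fin n) (Fin n) ℝ)
    (hA : A.PosDef) (hM : M.PosDef)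
    (W : Submodule ℝ (Fin n → ℝ))
    (hproj : T * T = T)
    (hrange : LinearMap.range T.mulVecLin = W)
    (hAorth : A * T = Tᵀ * A)
    (θ : ℝ) (hθ : 0 < θ) :
    (∀ u : Fin n → ℝ,
        Real.sqrt ((T *ᵥ u) ⬝ᵥ (M *ᵥ (T *ᵥ u))) ≤ θ * Real.sqrt (u ⬝ᵥ (A *ᵥ u))) ↔
    (∀ u : Fin n → ℝ,
        Real.sqrt ((T *ᵥ u) ⬝ᵥ (A *ᵥ (T *ᵥ u))) ≤
          θ * Real.sqrt (u ⬝ᵥ ((A * M⁻¹ * A) *ᵥ u))) := by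
  have hTT : ∀ u, T *ᵥ (T *ᵥ u) = T *ᵥ u := fun u => by rw [Matrix.mulVec_mulVec, hproj]
  have hMd : IsUnit M.det := hM.det_pos.ne'.isUnit
  have hAd : IsUnit A.det := hA.det_pos.ne'.isUnit
  have hMM : ∀ v, M *ᵥ (M⁻¹ *ᵥ v) = v := fun v => by
    rw [Matrix.mulVec_mulVec, Matrix.mul_nonsing_inv _ hMd, Matrix.one_mulVec]
  have hMM' : ∀ v, M⁻¹ *ᵥ (M *ᵥ v) = v := fun v => by
    rw [Matrix.mulVec_mulVec, Matrix.nonsing_inv_mul _ hMd, Matrix.one_mulVec]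
  have hAA : ∀ v, A *ᵥ (A⁻¹ *ᵥ v) = v := fun v => by
    rw [Matrix.mulVec_mulVec, Matrix.mul_nonsing_inv _ hAd, Matrix.one_mulVec]
  have hT : ∀ u v, (T *ᵥ u) ⬝ᵥ (A *ᵥ v) = u ⬝ᵥ (A *ᵥ (T *ᵥ v)) := fun u v => by
    rw [Matrix.mulVec_mulVec, hAorth, ← Matrix.mulVec_mulVec, an_adj Tᵀ,
      Matrix.transpose_transpose]
  have hQ : ∀ u, u ⬝ᵥ ((A * M⁻¹ * A) *ᵥ u) = (A *ᵥ u) ⬝ᵥ (M⁻¹ *ᵥ (A *ᵥ u)) := fun u => by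
    rw [Matrix.mul_assoc, ← Matrix.mulVec_mulVec, ← Matrix.mulVec_mulVec, an_adj A,
      an_symm hA]
  constructor
  · intro h u
    apply an_div (Real.sqrt_nonneg _) (by positivity)
    rw [Real.mul_self_sqrt (an_nonneg hA _), hQ]
    have e : (T *ᵥ u) ⬝ᵥ (A *ᵥ (T *ᵥ u)) = (T *ᵥ u) ⬝ᵥ (M *ᵥ (M⁻¹ *ᵥ (A *ᵥ u))) := by
      rw [hMM, hT, hTT, hT]
    have c := an_cs hM (T *ᵥ u) (M⁻¹ *ᵥ (A *ᵥ u))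
    rw [← e, hMM, dotProduct_comm (M⁻¹ *ᵥ (A *ᵥ u))] at c
    have h1 := h (T *ᵥ u)
    rw [hTT] at h1
    have := mul_le_mul_of_nonneg_right h1
      (Real.sqrt_nonneg ((A *ᵥ u) ⬝ᵥ (M⁻¹ *ᵥ (A *ᵥ u))))
    linarith
  · intro h u
    apply an_div (Real.sqrt_nonneg _) (by positivity)
    rw [Real.mul_self_sqrt (an_nonneg hM _)]
    have h1 := h (A⁻¹ *ᵥ (M *ᵥ (T *ᵥ u)))
    rw [hQ, hAA, hMM', dotProduct_comm (M *ᵥ (T *ᵥ u))] at h1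
    have c := an_cs hA u (T *ᵥ (A⁻¹ *ᵥ (M *ᵥ (T *ᵥ u))))
    rw [← hT, hAA] at c
    have := mul_le_mul_of_nonneg_left h1 (Real.sqrt_nonneg (u ⬝ᵥ (A *ᵥ u)))
    linarith
end
end
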